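/- Consider the decomposed system with state x = (x₁, x₂, x_c) ∈ ℝ^{n₁} × ℝ^{n₂} × ℝ^{n_c}, controls u = (u₁, u₂) with u_i valued in a nonempty set U_i ⊆ ℝ^{m_i}, and dynamics ẋ₁ = f₁(x₁, x_c) + g₁(x₁, x_c) u₁, ẋ₂ = f₂(x₂, x_c) + g₂(x₂, x_c) u₂, ẋ_c = f_c(x_c). Let (u₁, ζ₁) and (u₂, ζ₂) be admissible pairs for subsystems 1 and 2 on [t, 0], writing ζ_i(s) = (ζ_iᵃ(s), ζ_iᶜ(s)) for its x_i- and x_c-components. (i) If ζ₁ᶜ(s) = ζ₂ᶜ(s) for all s ∈ [t, 0], then u = (u₁, u₂) together with ξ(s) = (ζ₁ᵃ(s), ζ₂ᵃ(s), ζ₁ᶜ(s)) is an admissible pair for the full system on [t, 0]. (ii) If f_c is Lipschitz and ζ₁ᶜ(t) = ζ₂ᶜ(t), then automatically ζ₁ᶜ(s) = ζ₂ᶜ(s) for all s ∈ [t, 0]. -/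

import Mathlib

open MeasureTheory Set

noncomputable section

abbrev Euc (n : ℕ) : Type := EuclideanSpace ℝ (Fin n)

/-- An admissible pair for the control system `ξ' = R (ξ, u)` with control set `U` on the
interval `[t, 0]`: a measurable control taking values in `U` together with a continuous
trajectory satisfying the integral form of the dynamics, with integrable integrand. -/
def IsAdmissiblePair {E F : Type*} [NormedAddCommGroup E] [NormedSpace ℝ E]
    [CompleteSpace E] [MeasurableSpace F]
    (R : E → F → E) (U : Set F) (t : ℝ) (u : ℝ → F) (ξ : ℝ → E) : Prop :=
  Measurable u ∧ (∀ s, u s ∈ U) ∧ Continuous ξ ∧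
    ∀ s ∈ Icc t (0 : ℝ),
      IntervalIntegrable (fun τ => R (ξ τ) (u τ)) volume t s ∧
      ξ s = ξ t + ∫ τ in t..s, R (ξ τ) (u τ)

/-!
Admissible pairs are stable under products, and under a continuous linear map `L` intertwining two
dynamics, since `L` commutes with the integral. The intertwining is only needed along the
trajectory in question: when the two shared components coincide there, back-projection
`((x₁, c), (x₂, c')) ↦ (x₁, x₂, c)` carries the product of the subsystems to the full system.
Likewise, the shared component of a subsystem trajectory is a trajectory of the autonomous
vector field `fc` whatever the control is, so uniqueness of its integral curves applies.
-/

namespace IsAdmissiblePair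

variable {E E' F F' : Type*} [NormedAddCommGroup E] [NormedSpace ℝ E] [CompleteSpace E]
  [NormedAddCommGroup E'] [NormedSpace ℝ E'] [CompleteSpace E']
  [MeasurableSpace F] [MeasurableSpace F']
  {R : E → F → E} {U : Set F} {u : ℝ → F} {ξ : ℝ → E}
  {R' : E' → F' → E'} {U' : Set F'} {u' : ℝ → F'} {ξ' : ℝ → E'} {t : ℝ}

theorem map {S : E' → F → E'} (h : IsAdmissiblePair R U t u ξ) (L : E →L[ℝ] E')
    (hL : ∀ s ∈ Icc t 0, L (R (ξ s) (u s)) = S (L (ξ s)) (u s)) :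
    IsAdmissiblePair S U t u (fun s => L (ξ s)) := by
  obtain ⟨hu, huU, hξ, hdyn⟩ := h
  refine ⟨hu, huU, L.continuous.comp hξ, fun s hs => ?_⟩
  obtain ⟨hint, heq⟩ := hdyn s hs
  have hcongr : EqOn (fun τ => L (R (ξ τ) (u τ))) (fun τ => S (L (ξ τ)) (u τ)) (uIcc t s) := by
    rw [uIcc_of_le hs.1]
    exact fun τ hτ => hL τ ⟨hτ.1, hτ.2.trans hs.2⟩
  have hLint : IntervalIntegrable (fun τ => L (R (ξ τ) (u τ))) volume t s :=
    ⟨L.integrable_comp hint.1, L.integrable_comp hint.2⟩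
  refine ⟨hLint.congr (hcongr.mono uIoc_subset_uIcc), ?_⟩
  calc L (ξ s) = L (ξ t) + L (∫ τ in t..s, R (ξ τ) (u τ)) := by rw [heq, map_add]
    _ = L (ξ t) + ∫ τ in t..s, L (R (ξ τ) (u τ)) := by rw [L.intervalIntegral_comp_comm hint]
    _ = L (ξ t) + ∫ τ in t..s, S (L (ξ τ)) (u τ) := by
      rw [intervalIntegral.integral_congr hcongr]

theorem prodMk (h : IsAdmissiblePair R U t u ξ) (h' : IsAdmissiblePair R' U' t u' ξ') :
    IsAdmissiblePair (fun x v => (R x.1 v.1, R' x.2 v.2)) (U ×ˢ U') t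
      (fun s => (u s, u' s)) (fun s => (ξ s, ξ' s)) := by
  obtain ⟨hu, huU, hξ, hdyn⟩ := h
  obtain ⟨hu', huU', hξ', hdyn'⟩ := h'
  refine ⟨hu.prodMk hu', fun s => ⟨huU s, huU' s⟩, hξ.prodMk hξ', fun s hs => ?_⟩
  obtain ⟨hint, heq⟩ := hdyn s hs
  obtain ⟨hint', heq'⟩ := hdyn' s hs
  have hprod : IntervalIntegrable (fun τ => (R (ξ τ) (u τ), R' (ξ' τ) (u' τ))) volume t s :=
    ⟨hint.1.prodMk hint'.1, hint.2.prodMk hint'.2⟩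
  refine ⟨hprod, Prod.ext (heq.trans ?_) (heq'.trans ?_)⟩
  · exact congrArg (ξ t + ·) ((ContinuousLinearMap.fst ℝ E E').intervalIntegral_comp_comm hprod)
  · exact congrArg (ξ' t + ·) ((ContinuousLinearMap.snd ℝ E E').intervalIntegral_comp_comm hprod)

theorem hasDerivWithinAt (h : IsAdmissiblePair R U t u ξ) {s : ℝ} (hs : s ∈ Ico t 0)
    (hcont : ContinuousWithinAt (fun τ => R (ξ τ) (u τ)) (Ioi s) s) :
    HasDerivWithinAt ξ (R (ξ s) (u s)) (Ici s) s := by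
  obtain ⟨-, -, -, hdyn⟩ := h
  have hint : IntervalIntegrable (fun τ => R (ξ τ) (u τ)) volume t 0 :=
    (hdyn 0 ⟨hs.1.trans hs.2.le, le_rfl⟩).1
  have hmeas : StronglyMeasurableAtFilter (fun τ => R (ξ τ) (u τ)) (nhdsWithin s (Ioi s)) :=
    ⟨Ioc t 0, Filter.mem_of_superset (Ioc_mem_nhdsGT hs.2) (Ioc_subset_Ioc_left hs.1),
      hint.1.aestronglyMeasurable⟩
  have hderiv : HasDerivWithinAt (fun r => ξ t + ∫ τ in t..r, R (ξ τ) (u τ))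
      (R (ξ s) (u s)) (Ici s) s :=
    (intervalIntegral.integral_hasDerivWithinAt_right
      (hdyn s (Ico_subset_Icc_self hs)).1 hmeas hcont).const_add _
  refine hderiv.congr_of_eventuallyEq ?_ (hdyn s (Ico_subset_Icc_self hs)).2
  filter_upwards [Icc_mem_nhdsGE hs.2] with r hr
  exact (hdyn r ⟨hs.1.trans hr.1, hr.2⟩).2

theorem eqOn_of_locallyLipschitz {f : E → E} {η : ℝ → E}
    (h : IsAdmissiblePair (fun x _ => f x) U t u ξ) (hf : LocallyLipschitz f)
    (h' : IsAdmissiblePair (fun x _ => f x) U' t u' η) (h₀ : ξ t = η t) :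
    EqOn ξ η (Icc t 0) := by
  have hξ : Continuous ξ := h.2.2.1
  have hη : Continuous η := h'.2.2.1
  have hcompact : IsCompact (ξ '' Icc t 0 ∪ η '' Icc t 0) :=
    (isCompact_Icc.image hξ).union (isCompact_Icc.image hη)
  obtain ⟨K, hK⟩ := hf.locallyLipschitzOn.exists_lipschitzOnWith_of_compact hcompact
  exact ODE_solution_unique_of_mem_Icc_right (v := fun _ => f) (fun _ _ => hK)
    hξ.continuousOn
    (fun _ hs => h.hasDerivWithinAt hs (hf.continuous.comp hξ).continuousWithinAt)
    (fun _ hs => .inl (mem_image_of_mem ξ (Ico_subset_Icc_self hs)))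
    hη.continuousOn
    (fun _ hs => h'.hasDerivWithinAt hs (hf.continuous.comp hη).continuousWithinAt)
    (fun _ hs => .inr (mem_image_of_mem η (Ico_subset_Icc_self hs)))
    h₀

end IsAdmissiblePair

section Gluing

variable {X₁ X₂ Xc V₁ V₂ : Type*}
  [NormedAddCommGroup X₁] [NormedSpace ℝ X₁] [CompleteSpace X₁]
  [NormedAddCommGroup X₂] [NormedSpace ℝ X₂] [CompleteSpace X₂]
  [NormedAddCommGroup Xc] [NormedSpace ℝ Xc] [CompleteSpace Xc]
  [MeasurableSpace V₁] [MeasurableSpace V₂]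
  {F₁ : X₁ × Xc → V₁ → X₁} {F₂ : X₂ × Xc → V₂ → X₂} {fc : Xc → Xc}
  {U₁ : Set V₁} {U₂ : Set V₂} {t : ℝ}
  {u₁ : ℝ → V₁} {ζ₁ : ℝ → X₁ × Xc} {u₂ : ℝ → V₂} {ζ₂ : ℝ → X₂ × Xc}

theorem IsAdmissiblePair.sharedState
    (h : IsAdmissiblePair (fun z v => (F₁ z v, fc z.2)) U₁ t u₁ ζ₁) :
    IsAdmissiblePair (fun c _ => fc c) U₁ t u₁ (fun s => (ζ₁ s).2) :=
  h.map (ContinuousLinearMap.snd ℝ X₁ Xc) fun _ _ => rfl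

/-- The continuous linear map `((x₁, c), (x₂, c')) ↦ (x₁, x₂, c)`, which assembles a state of the
full system from states of the two subsystems. The shared state is read off the first subsystem;
on the pairs of interest `c = c'`. -/
def backProjection (X₁ X₂ Xc : Type*)
    [NormedAddCommGroup X₁] [NormedSpace ℝ X₁] [NormedAddCommGroup X₂] [NormedSpace ℝ X₂]
    [NormedAddCommGroup Xc] [NormedSpace ℝ Xc] :
    (X₁ × Xc) × (X₂ × Xc) →L[ℝ] X₁ × X₂ × Xc :=
  let p := ContinuousLinearMap.fst ℝ (X₁ × Xc) (X₂ × Xc)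
  let q := ContinuousLinearMap.snd ℝ (X₁ × Xc) (X₂ × Xc)
  (.fst ℝ X₁ Xc ∘L p).prod ((.fst ℝ X₂ Xc ∘L q).prod (.snd ℝ X₁ Xc ∘L p))

theorem IsAdmissiblePair.glue
    (h₁ : IsAdmissiblePair (fun z v => (F₁ z v, fc z.2)) U₁ t u₁ ζ₁)
    (h₂ : IsAdmissiblePair (fun z v => (F₂ z v, fc z.2)) U₂ t u₂ ζ₂)
    (hc : ∀ s ∈ Icc t 0, (ζ₁ s).2 = (ζ₂ s).2) :
    IsAdmissiblePair
      (fun x v => (F₁ (x.1, x.2.2) v.1, F₂ (x.2.1, x.2.2) v.2, fc x.2.2))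
      (U₁ ×ˢ U₂) t (fun s => (u₁ s, u₂ s)) (fun s => ((ζ₁ s).1, (ζ₂ s).1, (ζ₁ s).2)) := by
  refine (h₁.prodMk h₂).map (backProjection X₁ X₂ Xc) fun s hs => ?_
  change (F₁ (ζ₁ s) (u₁ s), F₂ (ζ₂ s) (u₂ s), fc (ζ₁ s).2) =
    (F₁ (ζ₁ s) (u₁ s), F₂ ((ζ₂ s).1, (ζ₁ s).2) (u₂ s), fc (ζ₁ s).2)
  rw [hc s hs]

theorem admissiblePair_glue_general
    (h₁ : IsAdmissiblePair (fun z v => (F₁ z v, fc z.2)) U₁ t u₁ ζ₁)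
    (h₂ : IsAdmissiblePair (fun z v => (F₂ z v, fc z.2)) U₂ t u₂ ζ₂) :
    ((∀ s ∈ Icc t 0, (ζ₁ s).2 = (ζ₂ s).2) →
      IsAdmissiblePair
        (fun x v => (F₁ (x.1, x.2.2) v.1, F₂ (x.2.1, x.2.2) v.2, fc x.2.2))
        (U₁ ×ˢ U₂) t (fun s => (u₁ s, u₂ s)) (fun s => ((ζ₁ s).1, (ζ₂ s).1, (ζ₁ s).2))) ∧
    (LocallyLipschitz fc → (ζ₁ t).2 = (ζ₂ t).2 → ∀ s ∈ Icc t 0, (ζ₁ s).2 = (ζ₂ s).2) :=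
  ⟨h₁.glue h₂, fun hfc => h₁.sharedState.eqOn_of_locallyLipschitz hfc h₂.sharedState⟩

end Gluing

/-- Gluing lemma for self-contained subsystems without shared controls.
(i) Subsystem admissible pairs whose shared-state components agree on `[t, 0]` glue by
back-projection to an admissible pair of the full system.
(ii) If the shared dynamics `f_c` is Lipschitz, agreement of the shared-state components
at the initial time forces agreement on all of `[t, 0]`. -/
theorem admissiblePair_glue {n₁ n₂ nc m₁ m₂ : ℕ}
    (f₁ : Euc n₁ × Euc nc → Euc n₁) (g₁ : Euc n₁ × Euc nc → (Euc m₁ →L[ℝ] Euc n₁))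
    (f₂ : Euc n₂ × Euc nc → Euc n₂) (g₂ : Euc n₂ × Euc nc → (Euc m₂ →L[ℝ] Euc n₂))
    (fc : Euc nc → Euc nc)
    (U₁ : Set (Euc m₁)) (U₂ : Set (Euc m₂)) (hU₁ : U₁.Nonempty) (hU₂ : U₂.Nonempty)
    (t : ℝ) (ht : t ≤ 0)
    (u₁ : ℝ → Euc m₁) (ζ₁ : ℝ → Euc n₁ × Euc nc)
    (u₂ : ℝ → Euc m₂) (ζ₂ : ℝ → Euc n₂ × Euc nc)
    (h₁ : IsAdmissiblePair
      (fun z v₁ => ((f₁ z + g₁ z v₁, fc z.2) : Euc n₁ × Euc nc)) U₁ t u₁ ζ₁)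
    (h₂ : IsAdmissiblePair
      (fun z v₂ => ((f₂ z + g₂ z v₂, fc z.2) : Euc n₂ × Euc nc)) U₂ t u₂ ζ₂) :
    -- (i) gluing under agreement of the shared-state components
    ((∀ s ∈ Icc t (0 : ℝ), (ζ₁ s).2 = (ζ₂ s).2) →
      IsAdmissiblePair
        (fun x v => ((f₁ (x.1, x.2.2) + g₁ (x.1, x.2.2) v.1,
          f₂ (x.2.1, x.2.2) + g₂ (x.2.1, x.2.2) v.2, fc x.2.2) : Euc n₁ × Euc n₂ × Euc nc))
        (U₁ ×ˢ U₂) t (fun s => (u₁ s, u₂ s))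
        (fun s => (((ζ₁ s).1, (ζ₂ s).1, (ζ₁ s).2) : Euc n₁ × Euc n₂ × Euc nc))) ∧
    -- (ii) uniqueness of the shared-state trajectory for Lipschitz `f_c`
    ((∃ K, LipschitzWith K fc) → (ζ₁ t).2 = (ζ₂ t).2 →
      ∀ s ∈ Icc t (0 : ℝ), (ζ₁ s).2 = (ζ₂ s).2) := by
  have ⟨hglue, hunique⟩ := admissiblePair_glue_general (F₁ := fun z v => f₁ z + g₁ z v)
    (F₂ := fun z v => f₂ z + g₂ z v) h₁ h₂
  exact ⟨hglue, fun ⟨_, hK⟩ => hunique hK.locallyLipschitz⟩
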